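/- arXiv:math/0205299 — 5 statements merged into one kernel-verified Lean document; each statement's English description precedes it below -/
import Mathlib

section
/- Given positive real numbers α_r, β_r (r = 1,…,m+n) and γ, γ′ with 0 < γ′ ≤ γ, the maximal value of Σ_{r=1}^{m+n} α_r x_r over all real x_1,…,x_{m+n} subject to Σ_{r=1}^{m+n} β_r x_r = γ, Σ_{r=m+1}^{m+n} β_r x_r ≤ γ′, and x_r ≥ 0 for all r, equals max{ γ·M₁, (γ − γ′)·M₁ + γ′·M₂ }, where M₁ = max_{r=1…m} (α_r/β_r) and M₂ = max_{r=m+1…m+n} (α_r/β_r). Moreover the maximum is given by the first expression if and only if M₁ ≥ M₂. -/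
/-!
Within one group, spending a budget `t = ∑ β r * x r` yields at most `t * M`, where `M` is the
largest ratio `α r / β r` (`sum_le_iSup_ratio_mul`), and this yield is reached by spending the
whole budget on an index of largest ratio (`exists_sum_eq_mul_iSup_ratio`). The program thus
reduces to maximizing `(γ - t) * M₁ + t * M₂` over `0 ≤ t ≤ γ'`. This function is affine in `t`,
so its maximum is at `t = 0` or `t = γ'`, and `t = 0` is optimal exactly when `M₂ ≤ M₁`.
-/

lemma sum_le_iSup_ratio_mul {k : ℕ} (a b x : Fin k → ℝ) (hb : ∀ r, 0 < b r)
    (hx : ∀ r, 0 ≤ x r) :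
    ∑ r, a r * x r ≤ (∑ r, b r * x r) * ⨆ r, a r / b r := by
  rw [Finset.sum_mul]
  refine Finset.sum_le_sum fun r _ => ?_
  have h : a r / b r ≤ ⨆ r, a r / b r :=
    le_ciSup (f := fun r => a r / b r) (Set.finite_range _).bddAbove r
  rw [div_le_iff₀ (hb r)] at h
  nlinarith [mul_le_mul_of_nonneg_right h (hx r)]

lemma exists_sum_eq_mul_iSup_ratio {k : ℕ} (hk : 0 < k) (a b : Fin k → ℝ)
    (hb : ∀ r, 0 < b r) (t : ℝ) (ht : 0 ≤ t) :
    ∃ x : Fin k → ℝ, (∀ r, 0 ≤ x r) ∧ ∑ r, b r * x r = t ∧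
      ∑ r, a r * x r = t * ⨆ r, a r / b r := by
  have : Nonempty (Fin k) := ⟨⟨0, hk⟩⟩
  obtain ⟨i, hi⟩ := exists_eq_ciSup_of_finite (f := fun r => a r / b r)
  have hbi := hb i
  refine ⟨fun r => if r = i then t / b i else 0, fun r => ?_, ?_, ?_⟩
  · dsimp only
    split_ifs <;> positivity
  · simp only [mul_ite, mul_zero, Finset.sum_ite_eq', Finset.mem_univ, if_true]
    field_simp
  · rw [← hi]
    simp only [mul_ite, mul_zero, Finset.sum_ite_eq', Finset.mem_univ, if_true]
    field_simp

/-- Lemma (linear programming with an extra constraint): given positive reals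
`α r, β r` (`r = 1,…,m`, the first group) and `α' r, β' r` (`r = 1,…,n`, the second
group) and `0 < γ' ≤ γ`, the maximal value of `∑ α r * x r + ∑ α' r * x' r` over all
nonnegative `x, x'` with `∑ β r * x r + ∑ β' r * x' r = γ` and `∑ β' r * x' r ≤ γ'`
is `max (γ M₁) ((γ - γ') M₁ + γ' M₂)`, where `M₁ = max_r (α r / β r)` and
`M₂ = max_r (α' r / β' r)`; moreover the maximum is given by the first expression
if and only if `M₁ ≥ M₂`. -/
theorem lp_max_two_groups (m n : ℕ) (hm : 0 < m) (hn : 0 < n)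
    (α β : Fin m → ℝ) (α' β' : Fin n → ℝ)
    (hα : ∀ r, 0 < α r) (hβ : ∀ r, 0 < β r)
    (hα' : ∀ r, 0 < α' r) (hβ' : ∀ r, 0 < β' r)
    (γ γ' : ℝ) (hγ' : 0 < γ') (hγ'γ : γ' ≤ γ) :
    IsGreatest {y : ℝ | ∃ (x : Fin m → ℝ) (x' : Fin n → ℝ),
        (∀ r, 0 ≤ x r) ∧ (∀ r, 0 ≤ x' r) ∧
        (∑ r, β r * x r) + (∑ r, β' r * x' r) = γ ∧
        (∑ r, β' r * x' r) ≤ γ' ∧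
        y = (∑ r, α r * x r) + ∑ r, α' r * x' r}
      (max (γ * ⨆ r, α r / β r)
        ((γ - γ') * (⨆ r, α r / β r) + γ' * ⨆ r, α' r / β' r)) ∧
    (max (γ * ⨆ r, α r / β r)
        ((γ - γ') * (⨆ r, α r / β r) + γ' * ⨆ r, α' r / β' r)
      = γ * ⨆ r, α r / β r ↔ (⨆ r, α' r / β' r) ≤ ⨆ r, α r / β r) := by
  obtain ⟨M₁, hM₁⟩ : ∃ M, M = ⨆ r, α r / β r := ⟨_, rfl⟩
  obtain ⟨M₂, hM₂⟩ : ∃ M, M = ⨆ r, α' r / β' r := ⟨_, rfl⟩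
  -- The first group receives `γ - t` and the second `t`, each at its best rate.
  have attained : ∀ t, 0 ≤ t → t ≤ γ' → ∃ (x : Fin m → ℝ) (x' : Fin n → ℝ),
      (∀ r, 0 ≤ x r) ∧ (∀ r, 0 ≤ x' r) ∧
      (∑ r, β r * x r) + (∑ r, β' r * x' r) = γ ∧
      (∑ r, β' r * x' r) ≤ γ' ∧
      (γ - t) * M₁ + t * M₂ = (∑ r, α r * x r) + ∑ r, α' r * x' r := by
    intro t ht htγ
    obtain ⟨x, hx, hxβ, hxα⟩ :=
      exists_sum_eq_mul_iSup_ratio hm α β hβ (γ - t) (by linarith)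
    obtain ⟨x', hx', hxβ', hxα'⟩ := exists_sum_eq_mul_iSup_ratio hn α' β' hβ' t ht
    refine ⟨x, x', hx, hx', ?_, ?_, ?_⟩
    · rw [hxβ, hxβ']; ring
    · rw [hxβ']; exact htγ
    · rw [hxα, hxα', hM₁, hM₂]
  rw [← hM₁, ← hM₂]
  refine ⟨⟨?_, ?_⟩, ?_⟩
  · rcases max_choice (γ * M₁) ((γ - γ') * M₁ + γ' * M₂) with h | h <;> rw [h]
    · simpa using attained 0 le_rfl hγ'.le
    · exact attained γ' hγ'.le le_rfl
  · rintro y ⟨x, x', hx, hx', hsum, hle, rfl⟩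
    have h₁ := sum_le_iSup_ratio_mul α β x hβ hx
    have h₂ := sum_le_iSup_ratio_mul α' β' x' hβ' hx'
    rw [← hM₁, eq_sub_of_add_eq hsum] at h₁
    rw [← hM₂] at h₂
    have ht : 0 ≤ ∑ r, β' r * x' r :=
      Finset.sum_nonneg fun r _ => mul_nonneg (hβ' r).le (hx' r)
    rcases le_total M₂ M₁ with h | h
    · refine le_max_of_le_left ?_
      nlinarith [mul_le_mul_of_nonneg_left h ht]
    · refine le_max_of_le_right ?_
      nlinarith [mul_nonneg (sub_nonneg.2 hle) (sub_nonneg.2 h)]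
  · rw [max_eq_left_iff, ← mul_le_mul_iff_right₀ (b := M₂) (c := M₁) hγ']
    constructor <;> intro h <;> linarith
end

section
/- Let V_1, V_2, V_3 be three r-dimensional subspaces of GF(2)^{2r} such that V_i ∩ V_j = {0} for i ≠ j. Then there exist 2^r − 1 two-dimensional subspaces W_1,…,W_{2^r−1} of GF(2)^{2r}, any two of which intersect only in the zero vector, whose union equals V_1 ∪ V_2 ∪ V_3. -/
/-!
Any two of the three subspaces are complementary, by a dimension count. Hence every `c ∈ V 2`
is uniquely `f c + g c` with `f c ∈ V 0` and `g c ∈ V 1`. The planes are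
`{0, f c, g c, c} = span {f c, g c}` for the `2 ^ r - 1` nonzero vectors `c` of `V 2`. Both `f` and
`g` are injective (if `f c = f d`, then `c - d ∈ V 1 ⊓ V 2`), so distinct planes meet trivially;
both are surjective (decompose `a ∈ V 0` along `V 1 ⊕ V 2`), so the planes cover `V 0` and `V 1`
as well as `V 2`.
-/

lemma mem_span_pair_zmod_two {M : Type*} [AddCommGroup M] [Module (ZMod 2) M] {x a b : M} :
    x ∈ Submodule.span (ZMod 2) {a, b} ↔ x = 0 ∨ x = a ∨ x = b ∨ x = a + b := by
  have h2 : ∀ s : ZMod 2, s = 0 ∨ s = 1 := by decide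
  rw [Submodule.mem_span_pair]
  constructor
  · rintro ⟨s, t, rfl⟩
    rcases h2 s with rfl | rfl <;> rcases h2 t with rfl | rfl <;> simp
  · rintro (rfl | rfl | rfl | rfl)
    · exact ⟨0, 0, by simp⟩
    · exact ⟨1, 0, by simp⟩
    · exact ⟨0, 1, by simp⟩
    · exact ⟨1, 1, by simp⟩

lemma finrank_span_pair_zmod_two {M : Type*} [AddCommGroup M] [Module (ZMod 2) M] {a b : M}
    (ha : a ≠ 0) (hb : b ≠ 0) (hab : a + b ≠ 0) :
    Module.finrank (ZMod 2) (Submodule.span (ZMod 2) {a, b}) = 2 := by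
  have h2 : ∀ s : ZMod 2, s = 0 ∨ s = 1 := by decide
  have hli : LinearIndependent (ZMod 2) ![a, b] := by
    rw [LinearIndependent.pair_iff]
    intro s t h
    rcases h2 s with rfl | rfl <;> rcases h2 t with rfl | rfl <;> simp_all
  have := finrank_span_eq_card hli
  rwa [Matrix.range_cons_cons_empty, Fintype.card_fin] at this

/-- Two trivially intersecting `r`-dimensional subspaces span a `2r`-dimensional space. -/
lemma sup_eq_top_of_finrank {r : ℕ} {A B : Submodule (ZMod 2) (Fin (2 * r) → ZMod 2)}
    (hA : Module.finrank (ZMod 2) A = r) (hB : Module.finrank (ZMod 2) B = r)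
    (h : A ⊓ B = ⊥) : A ⊔ B = ⊤ := by
  apply Submodule.eq_top_of_finrank_eq
  have := Submodule.finrank_sup_add_finrank_inf_eq A B
  rw [h, finrank_bot] at this
  rw [Module.finrank_fin_fun]
  omega

/-- Lemma 7: if `V₁, V₂, V₃` are three `r`-dimensional subspaces of `GF(2)^{2r}`
pairwise intersecting only in the zero vector, then their union can be replaced by
`2^r - 1` two-dimensional subspaces pairwise intersecting only in the zero vector. -/
theorem three_spaces_to_planes (r : ℕ) (hr : 1 ≤ r)
    (V : Fin 3 → Submodule (ZMod 2) (Fin (2 * r) → ZMod 2))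
    (hdim : ∀ i, Module.finrank (ZMod 2) ↥(V i) = r)
    (hdisj : ∀ i j, i ≠ j → V i ⊓ V j = ⊥) :
    ∃ W : Fin (2 ^ r - 1) → Submodule (ZMod 2) (Fin (2 * r) → ZMod 2),
      (∀ i, Module.finrank (ZMod 2) ↥(W i) = 2) ∧
      (∀ i j, i ≠ j → W i ⊓ W j = ⊥) ∧
      (⋃ i, (W i : Set (Fin (2 * r) → ZMod 2)))
        = (V 0 : Set (Fin (2 * r) → ZMod 2)) ∪ (V 1 : Set (Fin (2 * r) → ZMod 2))
            ∪ (V 2 : Set (Fin (2 * r) → ZMod 2)) := by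
  have zero_of_mem : ∀ {i j}, i ≠ j → ∀ {x}, x ∈ V i → x ∈ V j → x = 0 := by
    intro i j hij x hi hj
    have : x ∈ V i ⊓ V j := ⟨hi, hj⟩
    rwa [hdisj i j hij, Submodule.mem_bot] at this
  have decomp : ∀ {i j}, i ≠ j → ∀ x, ∃ a ∈ V i, ∃ b ∈ V j, a + b = x := by
    intro i j hij x
    rw [← Submodule.mem_sup, sup_eq_top_of_finrank (hdim i) (hdim j) (hdisj i j hij)]
    trivial
  have h01 : (0 : Fin 3) ≠ 1 := by decide
  have h02 : (0 : Fin 3) ≠ 2 := by decide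
  have h12 : (1 : Fin 3) ≠ 2 := by decide
  choose f hf g hg hfg using decomp h01
  have f_inj : ∀ c ∈ V 2, ∀ d ∈ V 2, f c = f d → c = d := by
    intro c hc d hd h
    refine sub_eq_zero.mp (zero_of_mem h12 ?_ (sub_mem hc hd))
    have : c - d = g c - g d := by
      nth_rewrite 1 [← hfg c, ← hfg d]
      rw [h]; abel
    exact this ▸ sub_mem (hg c) (hg d)
  have g_inj : ∀ c ∈ V 2, ∀ d ∈ V 2, g c = g d → c = d := by
    intro c hc d hd h
    refine sub_eq_zero.mp (zero_of_mem h02 ?_ (sub_mem hc hd))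
    have : c - d = f c - f d := by
      nth_rewrite 1 [← hfg c, ← hfg d]
      rw [h]; abel
    exact this ▸ sub_mem (hf c) (hf d)
  have uniq : ∀ a ∈ V 0, ∀ b ∈ V 1, f (a + b) = a ∧ g (a + b) = b := by
    intro a ha b hb
    have h := hfg (a + b)
    have e : f (a + b) - a = b - g (a + b) := by
      rw [sub_eq_sub_iff_add_eq_add, h, add_comm]
    have z : f (a + b) - a = 0 :=
      zero_of_mem h01 (sub_mem (hf _) ha) (e ▸ sub_mem hb (hg _))
    exact ⟨sub_eq_zero.mp z, (sub_eq_zero.mp (e ▸ z)).symm⟩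
  have f_zero : f 0 = 0 := by simpa using (uniq 0 (zero_mem _) 0 (zero_mem _)).1
  have g_zero : g 0 = 0 := by simpa using (uniq 0 (zero_mem _) 0 (zero_mem _)).2
  have f_surj : ∀ a ∈ V 0, ∃ c ∈ V 2, f c = a := by
    intro a ha
    obtain ⟨b, hb, c, hc, h⟩ := decomp h12 a
    have e : a + -b = c := by rw [← h]; abel
    exact ⟨c, hc, e ▸ (uniq a ha (-b) (neg_mem hb)).1⟩
  have g_surj : ∀ b ∈ V 1, ∃ c ∈ V 2, g c = b := by
    intro b hb
    obtain ⟨a, ha, c, hc, h⟩ := decomp h02 b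
    have e : -a + b = c := by rw [← h]; abel
    exact ⟨c, hc, e ▸ (uniq (-a) (neg_mem ha) b hb).2⟩
  have card : Nat.card {c : V 2 // c ≠ 0} = 2 ^ r - 1 := by
    classical
    have : Fintype (V 2) := Fintype.ofFinite _
    rw [Nat.card_eq_fintype_card, Fintype.card_subtype_compl, Fintype.card_subtype_eq,
      Module.card_eq_pow_finrank (K := ZMod 2), hdim 2, ZMod.card]
  let e : Fin (2 ^ r - 1) ≃ {c : V 2 // c ≠ 0} := (Finite.equivFinOfCardEq card).symm
  let v : Fin (2 ^ r - 1) → (Fin (2 * r) → ZMod 2) := fun i => (e i).1.1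
  have hv : ∀ i, v i ∈ V 2 := fun i => (e i).1.2
  have hv0 : ∀ i, v i ≠ 0 := fun i h => (e i).2 (Subtype.ext h)
  have v_inj : ∀ i j, v i = v j → i = j := fun i j h =>
    e.injective (Subtype.ext (Subtype.ext h))
  have v_surj : ∀ c ∈ V 2, c ≠ 0 → ∃ i, v i = c := by
    intro c hc h
    obtain ⟨i, hi⟩ := e.surjective ⟨⟨c, hc⟩, fun h' => h (congrArg Subtype.val h')⟩
    exact ⟨i, by simp [v, hi]⟩
  have mem_W : ∀ {i x}, x ∈ Submodule.span (ZMod 2) {f (v i), g (v i)} ↔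
      x = 0 ∨ x = f (v i) ∨ x = g (v i) ∨ x = v i := by
    intro i x
    rw [mem_span_pair_zmod_two, hfg]
  refine ⟨fun i => Submodule.span (ZMod 2) {f (v i), g (v i)}, ?_, ?_, ?_⟩
  · intro i
    apply finrank_span_pair_zmod_two
    · exact fun h => hv0 i (f_inj _ (hv i) 0 (zero_mem _) (h.trans f_zero.symm))
    · exact fun h => hv0 i (g_inj _ (hv i) 0 (zero_mem _) (h.trans g_zero.symm))
    · rw [hfg]; exact hv0 i
  · intro i j hij
    rw [Submodule.eq_bot_iff]
    rintro x ⟨hi, hj⟩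
    rcases mem_W.mp hi with h | h | h | h <;> rcases mem_W.mp hj with h' | h' | h' | h' <;>
      try assumption
    · exact absurd (v_inj _ _ (f_inj _ (hv i) _ (hv j) (h ▸ h'))) hij
    · exact zero_of_mem h01 (h ▸ hf _) (h' ▸ hg _)
    · exact zero_of_mem h02 (h ▸ hf _) (h' ▸ hv _)
    · exact zero_of_mem h01 (h' ▸ hf _) (h ▸ hg _)
    · exact absurd (v_inj _ _ (g_inj _ (hv i) _ (hv j) (h ▸ h'))) hij
    · exact zero_of_mem h12 (h ▸ hg _) (h' ▸ hv _)
    · exact zero_of_mem h02 (h' ▸ hf _) (h ▸ hv _)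
    · exact zero_of_mem h12 (h' ▸ hg _) (h ▸ hv _)
    · exact absurd (v_inj _ _ (h ▸ h')) hij
  · ext x
    simp only [Set.mem_iUnion, Set.mem_union, SetLike.mem_coe]
    constructor
    · rintro ⟨i, hi⟩
      rcases mem_W.mp hi with rfl | rfl | rfl | rfl
      · exact Or.inr (zero_mem _)
      · exact Or.inl (Or.inl (hf _))
      · exact Or.inl (Or.inr (hg _))
      · exact Or.inr (hv _)
    · intro hx
      by_cases x0 : x = 0
      -- The zero vector is covered because `1 ≤ r` makes the index type nonempty.
      · have : 2 ^ 1 ≤ 2 ^ r := Nat.pow_le_pow_right (by norm_num) hr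
        exact ⟨⟨0, by omega⟩, x0 ▸ zero_mem _⟩
      rcases hx with (hx | hx) | hx
      · obtain ⟨c, hc, rfl⟩ := f_surj x hx
        obtain ⟨i, rfl⟩ := v_surj c hc (fun h => x0 (by rw [h, f_zero]))
        exact ⟨i, mem_W.mpr (by simp)⟩
      · obtain ⟨c, hc, rfl⟩ := g_surj x hx
        obtain ⟨i, rfl⟩ := v_surj c hc (fun h => x0 (by rw [h, g_zero]))
        exact ⟨i, mem_W.mpr (by simp)⟩
      · obtain ⟨i, rfl⟩ := v_surj x hx x0
        exact ⟨i, mem_W.mpr (by simp)⟩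
end

section
/- There exists a collection of subspaces of GF(2)^6 consisting of four 3-dimensional subspaces, ten 2-dimensional subspaces and five 1-dimensional subspaces, any two of which intersect only in the zero vector (so that their nonzero vectors partition the 63 nonzero vectors of GF(2)^6). Consequently there exists a geometric orthogonal array OA(64, 2^5 4^{10} 8^4) of strength 2. -/
/-!
A partition of the nonzero vectors of `GF(2)^6` is the same as a colouring `color` of these
vectors, and a colour class together with `0` is a subspace as soon as the sum of two distinct
nonzero vectors of the same colour again has that colour (`color_add`).  For subspaces obtained
this way, trivial pairwise intersection and covering of the whole space are automatic, and the
dimensions are read off from the sizes of the colour classes.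

The colouring is an explicit table.  Writing a vector as `(x, y)` with `x, y ∈ GF(2)^3`, the four
3-dimensional subspaces are `x = 0`, `y = 0`, `y = x` and `y = A x`, where `A` is the companion
matrix of `X^3 + X + 1`; since neither `0` nor `1` is an eigenvalue of `A`, they intersect trivially.
Of the 35 remaining nonzero vectors, 30 are divided into ten triples `{u, v, u + v}`, found by a
computer search, and the last five span the 1-dimensional subspaces.
The closure condition and the class sizes are checked by kernel evaluation.
-/

/-- The parameter set `L` (with `p^n` runs) is realized by a geometric orthogonal array
of strength 2: there is a mixed spread of strength 2, i.e. a collection of subspaces of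
`GF(p)^n` pairwise intersecting only in the zero vector, whose multiset of sizes
`p^(dim Vᵢ)` is exactly the multiset of levels `L`. -/
def GeomRealized (p n : ℕ) (L : Multiset ℕ) : Prop :=
  ∃ (k : ℕ) (V : Fin k → Submodule (ZMod p) (Fin n → ZMod p)),
    (∀ i j : Fin k, i ≠ j → V i ⊓ V j = ⊥) ∧
    Multiset.map (fun i => p ^ Module.finrank (ZMod p) ↥(V i)) Finset.univ.val = L

/-- The colours of the vectors of `GF(2)^6`, where the vector `v` stands at position
`∑ i, v i * 2 ^ i`.  Colours `0`–`3` are 3-dimensional subspaces, `4`–`13` are 2-dimensional and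
`14`–`18` are 1-dimensional.  The entry of the zero vector is irrelevant. -/
def colorTable : List (Fin 19) := [
  0, 1, 1, 1, 1, 1, 1, 1,
  0, 2, 4, 9, 12, 3, 10, 13,
  0, 3, 2, 7, 4, 13, 14, 6,
  0, 5, 13, 2, 3, 11, 4, 8,
  0, 11, 3, 5, 2, 9, 7, 15,
  0, 16, 17, 8, 6, 2, 9, 3,
  0, 12, 18, 3, 8, 7, 2, 10,
  0, 10, 5, 6, 11, 12, 3, 2]

/-- The position of a vector in `colorTable`: its coordinates read as binary digits, the
first coordinate being the least significant. -/
def vecIndex (v : Fin 6 → ZMod 2) : ℕ :=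
  (v 0).val + 2 * (v 1).val + 4 * (v 2).val + 8 * (v 3).val + 16 * (v 4).val + 32 * (v 5).val

/-- The index of the member of the spread containing a given nonzero vector. -/
def color (v : Fin 6 → ZMod 2) : Fin 19 := colorTable.getD (vecIndex v) 0

lemma color_add : ∀ v w : Fin 6 → ZMod 2, v ≠ 0 → w ≠ 0 → color v = color w →
    v + w = 0 ∨ color (v + w) = color v := by
  decide +kernel

/-- The `i`-th member of the spread: the zero vector and all vectors of colour `i`. -/
def spreadSpace (i : Fin 19) : Submodule (ZMod 2) (Fin 6 → ZMod 2) where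
  carrier := {v | v = 0 ∨ color v = i}
  zero_mem' := Or.inl rfl
  add_mem' := by
    rintro v w hv hw
    by_cases hv0 : v = 0
    · simpa [hv0] using hw
    by_cases hw0 : w = 0
    · simpa [hw0] using hv
    have hv' : color v = i := hv.resolve_left hv0
    have hw' : color w = i := hw.resolve_left hw0
    exact (color_add v w hv0 hw0 (hv'.trans hw'.symm)).imp id fun h => h.trans hv'
  smul_mem' := by
    intro c v hv
    have hc : c = 0 ∨ c = 1 := by revert c; decide
    rcases hc with rfl | rfl
    · exact Or.inl (zero_smul _ _)
    · rwa [one_smul]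

lemma mem_spreadSpace {i : Fin 19} {v : Fin 6 → ZMod 2} :
    v ∈ spreadSpace i ↔ v = 0 ∨ color v = i := Iff.rfl

lemma card_color_class : ∀ i : Fin 19,
    Fintype.card {v : Fin 6 → ZMod 2 // v = 0 ∨ color v = i} =
      2 ^ (if (i : ℕ) < 4 then 3 else if (i : ℕ) < 14 then 2 else 1) := by
  decide +kernel

lemma finrank_spreadSpace (i : Fin 19) : Module.finrank (ZMod 2) ↥(spreadSpace i) =
    if (i : ℕ) < 4 then 3 else if (i : ℕ) < 14 then 2 else 1 := by
  have h := Module.natCard_eq_pow_finrank (K := ZMod 2) (V := spreadSpace i)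
  have h' : Nat.card (spreadSpace i) =
      Fintype.card {v : Fin 6 → ZMod 2 // v = 0 ∨ color v = i} :=
    Nat.card_eq_fintype_card (α := {v : Fin 6 → ZMod 2 // v = 0 ∨ color v = i})
  rw [h', card_color_class, Nat.card_zmod] at h
  exact (Nat.pow_right_injective le_rfl h).symm

lemma spreadSpace_inf (i j : Fin 19) (hij : i ≠ j) : spreadSpace i ⊓ spreadSpace j = ⊥ := by
  rw [Submodule.eq_bot_iff]
  rintro v ⟨hi, hj⟩
  rcases hi with h | hi
  · exact h
  rcases hj with h | hj
  · exact h
  exact absurd (hi.symm.trans hj) hij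

/-- There is a collection of subspaces of `GF(2)^6` consisting of four 3-dimensional,
ten 2-dimensional and five 1-dimensional subspaces, any two of which intersect only in
the zero vector, whose union is all of `GF(2)^6` (so their nonzero vectors partition
the 63 nonzero vectors).  Consequently there is a geometric orthogonal array
`OA(64, 2^5 4^10 8^4)` of strength 2. -/
theorem spread_2_5_4_10_8_4 :
    (∃ V : Fin 19 → Submodule (ZMod 2) (Fin 6 → ZMod 2),
      (∀ i : Fin 19, Module.finrank (ZMod 2) ↥(V i) =
        if (i : ℕ) < 4 then 3 else if (i : ℕ) < 14 then 2 else 1) ∧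
      (∀ i j, i ≠ j → V i ⊓ V j = ⊥) ∧
      (⋃ i, (V i : Set (Fin 6 → ZMod 2))) = Set.univ) ∧
    GeomRealized 2 6
      (Multiset.replicate 5 2 + Multiset.replicate 10 4 + Multiset.replicate 4 8) := by
  refine ⟨⟨spreadSpace, finrank_spreadSpace, spreadSpace_inf, ?_⟩,
    19, spreadSpace, spreadSpace_inf, ?_⟩
  · exact Set.eq_univ_of_forall fun v => Set.mem_iUnion.2 ⟨color v, Or.inr rfl⟩
  · simp only [finrank_spreadSpace]
    decide +kernel
end

section
/- Let q be a prime power and let a, b be integers with b/2 ≤ a < b. Then there exist a subspace of GF(q)^b of dimension a and q^a subspaces of GF(q)^b of dimension b − a, any two of these q^a + 1 subspaces intersecting only in the zero vector, whose union is all of GF(q)^b. Consequently a geometric orthogonal array OA(q^b, (q^{b−a})^{q^a} (q^a)^1) of strength 2 exists. -/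
/-!
Let `K` be the degree-`a` extension field of `F`. As `b - a ≤ a`, there is an injective `F`-linear
map `φ : F^(b-a) → K`, and `F^(b-a) × K` is `F`-isomorphic to `F^b`. The large subspace is
`0 × K`; the `q^a` small ones are the graphs of the maps `s ↦ c * φ s` for `c : K`.
A graph meets `0 × K` only in zero. Since `φ s` is invertible in `K` for `s ≠ 0`, a vector `(s, x)`
with `s ≠ 0` lies on exactly one graph, the one with `c = x / φ s`; hence the graphs pairwise meet
only in zero, and together with `0 × K` they cover everything.
The array is then given by listing these `q^a + 1` subspaces.
-/


/-- The parameter set `L` (with `q^n` runs, `q = |F|`) is realized by a geometric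
orthogonal array of strength 2 over the finite field `F`: there is a mixed spread of
strength 2, i.e. a collection of subspaces of `F^n` pairwise intersecting only in the
zero vector, whose multiset of sizes `q^(dim Vᵢ)` is exactly the multiset of
levels `L`. -/
def GeomRealizedOver (F : Type) [Field F] [Fintype F] (n : ℕ) (L : Multiset ℕ) : Prop :=
  ∃ (k : ℕ) (V : Fin k → Submodule F (Fin n → F)),
    (∀ i j : Fin k, i ≠ j → V i ⊓ V j = ⊥) ∧
    Multiset.map (fun i => Fintype.card F ^ Module.finrank F ↥(V i)) Finset.univ.val = L

/-- A finite field has an extension field of every positive degree. -/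
theorem exists_extension_finrank_eq (F : Type) [Field F] [Finite F] (a : ℕ) (ha : 0 < a) :
    ∃ (K : Type) (_ : Field K) (_ : Algebra F K), Module.Finite F K ∧ Module.finrank F K = a := by
  obtain ⟨p, hp⟩ := CharP.exists F
  have : Fact p.Prime := ⟨CharP.char_is_prime F p⟩
  have : NeZero a := ⟨ha.ne'⟩
  exact ⟨FiniteField.Extension F p a, inferInstance, inferInstance, inferInstance,
    FiniteField.finrank_extension F p a⟩

theorem exists_injective_linearMap (F K : Type) [Field F] [AddCommGroup K] [Module F K]
    [Module.Finite F K] (m : ℕ) (h : m ≤ Module.finrank F K) :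
    ∃ φ : (Fin m → F) →ₗ[F] K, Function.Injective φ := by
  let v : Fin m → K := Module.finBasis F K ∘ Fin.castLE h
  have hv : LinearIndependent F v :=
    (Module.finBasis F K).linearIndependent.comp _ (Fin.castLE_injective h)
  exact ⟨Fintype.linearCombination F v, hv.fintypeLinearCombination_injective⟩

/-- The partition of `F^b` into one subspace of dimension `a` and `q^a` subspaces of dimension
`b - a`. -/
theorem exists_spread (F : Type) [Field F] [Fintype F] (q a b : ℕ)
    (hq : Fintype.card F = q) (hab : b ≤ 2 * a) (hba : a < b) :
    ∃ (W : Submodule F (Fin b → F)) (U : Fin (q ^ a) → Submodule F (Fin b → F)),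
      Module.finrank F ↥W = a ∧
      (∀ i, Module.finrank F ↥(U i) = b - a) ∧
      (∀ i, W ⊓ U i = ⊥) ∧
      (∀ i j, i ≠ j → U i ⊓ U j = ⊥) ∧
      ((W : Set (Fin b → F)) ∪ ⋃ i, (U i : Set (Fin b → F))) = Set.univ := by
  obtain ⟨K, _, _, _, hK⟩ := exists_extension_finrank_eq F a (by omega)
  obtain ⟨φ, hφ⟩ := exists_injective_linearMap F K (b - a) (by omega)
  have hφ0 : ∀ s, φ s = 0 → s = 0 := fun s hs => hφ (by rw [hs, map_zero])
  let e : ((Fin (b - a) → F) × K) ≃ₗ[F] (Fin b → F) :=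
    LinearEquiv.ofFinrankEq _ _ (by rw [Module.finrank_prod, hK]; simp; omega)
  have hcard : Nat.card K = q ^ a := by
    rw [Module.natCard_eq_pow_finrank (K := F), hK, Nat.card_eq_fintype_card, hq]
  have : Finite K := Module.finite_of_finite F
  let c : Fin (q ^ a) ≃ K := (Finite.equivFinOfCardEq hcard).symm
  let w : K →ₗ[F] (Fin b → F) := e.toLinearMap ∘ₗ LinearMap.inr F _ _
  let u : K → (Fin (b - a) → F) →ₗ[F] (Fin b → F) := fun k =>
    e.toLinearMap ∘ₗ LinearMap.prod LinearMap.id (LinearMap.mulLeft F k ∘ₗ φ)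
  have hw : ∀ x, w x = e (0, x) := fun x => rfl
  have hu : ∀ k s, u k s = e (s, k * φ s) := fun k s => rfl
  refine ⟨LinearMap.range w, fun i => LinearMap.range (u (c i)), ?_, ?_, ?_, ?_, ?_⟩
  · rw [LinearMap.finrank_range_of_inj, hK]
    intro x y h
    simpa [hw] using h
  · intro i
    rw [LinearMap.finrank_range_of_inj]
    · simp
    · intro s t h
      rw [hu, hu, e.injective.eq_iff, Prod.mk.injEq] at h
      exact h.1
  · intro i
    rw [Submodule.eq_bot_iff]
    rintro _ ⟨⟨x, rfl⟩, ⟨s, hs⟩⟩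
    rw [hu, hw, e.injective.eq_iff, Prod.mk.injEq] at hs
    obtain ⟨rfl, rfl⟩ := hs
    simp [hw]
  · intro i j hij
    rw [Submodule.eq_bot_iff]
    rintro _ ⟨⟨t, rfl⟩, ⟨s, hs⟩⟩
    rw [hu, hu, e.injective.eq_iff, Prod.mk.injEq] at hs
    obtain ⟨rfl, h⟩ := hs
    rcases mul_eq_mul_right_iff.1 h with h | h
    · exact absurd (c.injective h).symm hij
    · rw [hφ0 s h, map_zero]
  · rw [Set.eq_univ_iff_forall]
    intro y
    obtain ⟨⟨s, x⟩, rfl⟩ := e.surjective y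
    by_cases hs : s = 0
    · exact Or.inl ⟨x, by rw [hw, hs]⟩
    · refine Or.inr (Set.mem_iUnion.2 ⟨c.symm (x / φ s), s, ?_⟩)
      rw [hu, Equiv.apply_symm_apply, div_mul_cancel₀ _ (fun h => hs (hφ0 s h))]

/-- Example (iii): let `q` be a prime power (`F = GF(q)`) and `b/2 ≤ a < b`.  Then
`F^b` is the union of one `a`-dimensional subspace and `q^a` subspaces of dimension
`b - a`, any two of these `q^a + 1` subspaces meeting only in the zero vector.
Consequently a geometric strength-2 orthogonal array `OA(q^b, (q^{b-a})^{q^a} (q^a)^1)`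
exists. -/
theorem spread_one_large_subspace (F : Type) [Field F] [Fintype F] (q a b : ℕ)
    (hq : Fintype.card F = q) (hab : b ≤ 2 * a) (hba : a < b) :
    (∃ (W : Submodule F (Fin b → F)) (U : Fin (q ^ a) → Submodule F (Fin b → F)),
      Module.finrank F ↥W = a ∧
      (∀ i, Module.finrank F ↥(U i) = b - a) ∧
      (∀ i, W ⊓ U i = ⊥) ∧
      (∀ i j, i ≠ j → U i ⊓ U j = ⊥) ∧
      ((W : Set (Fin b → F)) ∪ ⋃ i, (U i : Set (Fin b → F))) = Set.univ) ∧
    GeomRealizedOver F b (Multiset.replicate (q ^ a) (q ^ (b - a)) + {q ^ a}) := by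
  obtain ⟨W, U, hW, hU, hWU, hUU, hcov⟩ := exists_spread F q a b hq hab hba
  refine ⟨⟨W, U, hW, hU, hWU, hUU, hcov⟩, q ^ a + 1, Fin.cons W U, ?_, ?_⟩
  · intro i j hij
    induction i using Fin.cases with
    | zero =>
      induction j using Fin.cases with
      | zero => exact absurd rfl hij
      | succ j => simpa using hWU j
    | succ i =>
      induction j using Fin.cases with
      | zero => simpa [inf_comm] using hWU i
      | succ j => simpa using hUU i j (fun h => hij (congrArg Fin.succ h))
  · rw [Fin.univ_succ, Finset.cons_val, Multiset.map_cons, Finset.map_val, Multiset.map_map]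
    simp only [Function.comp_def, Function.Embedding.coeFn_mk, hq]
    -- `Fin.cons` sits inside a dependent coercion, so its values are unfolded by `change`.
    change q ^ Module.finrank F W ::ₘ
      Multiset.map (fun i => q ^ Module.finrank F (U i)) Finset.univ.val = _
    simp only [hW, hU]
    rw [Multiset.map_const', add_comm, Multiset.singleton_add]
    simp
end

section
/- There exist five 3-dimensional subspaces V_1,…,V_5 of GF(2)^6, pairwise intersecting only in the zero vector, such that no 3-dimensional subspace W of GF(2)^6 satisfies W ∩ V_i = {0} for all i = 1,…,5; that is, there is a set of five pairwise disjoint planes PG(2,2) in PG(5,2) that cannot be extended to a set of six pairwise disjoint planes. -/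
/-!
Write `GF(2)^6 = F³ × F³` with `F = GF(2)`. A 3-dimensional subspace meeting `{0} × F³` trivially is
the graph `{(a, aC)}` of a 3 × 3 matrix `C`, and the graphs of `C` and `D` are disjoint exactly when
no nonzero row vector `a` satisfies `aC = aD`. The five planes are `{0} × F³` and the graphs of
`0, 1, A, B`, where `A` and `B` have irreducible characteristic polynomial and `A - B` is
invertible, but `A` and `B` do not lie in a common copy of `GF(8)`. A sixth disjoint plane would be
the graph of some `C` (`exists_graph_rows`), and running through the 512 matrices shows that every
`C` agrees with one of `0, 1, A, B` on a nonzero vector (`exists_agree`).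
-/

open Matrix

namespace PlaneSpread

/-- The matrices `0, 1, A, B` whose graphs are the first four planes. -/
def slope : Fin 4 → Matrix (Fin 3) (Fin 3) (ZMod 2) :=
  ![0, 1, !![0, 1, 0; 0, 0, 1; 1, 1, 0], !![0, 1, 1; 1, 1, 0; 1, 0, 0]]

/-- The 3 × 6 matrix `[1 | C]`, whose row space is the graph of `a ↦ a ᵥ* C`. -/
def graphMatrix (C : Matrix (Fin 3) (Fin 3) (ZMod 2)) : Matrix (Fin 3) (Fin 6) (ZMod 2) :=
  fun i => Fin.append ((1 : Matrix (Fin 3) (Fin 3) (ZMod 2)) i) (C i)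

/-- The matrices whose row spaces are the five planes: `[0 | 1]`, and `[1 | C]` for `C` among the
four slopes. -/
def gen : Fin 5 → Matrix (Fin 3) (Fin 6) (ZMod 2) :=
  Fin.cons (fun i => Fin.append (0 : Fin 3 → ZMod 2) ((1 : Matrix (Fin 3) (Fin 3) (ZMod 2)) i))
    (fun i => graphMatrix (slope i))

lemma gen_zero_apply (i : Fin 3) :
    gen 0 i = Fin.append (0 : Fin 3 → ZMod 2) ((1 : Matrix (Fin 3) (Fin 3) (ZMod 2)) i) := rfl

lemma gen_succ (i : Fin 4) : gen i.succ = graphMatrix (slope i) := rfl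

/-- The five planes, as row spaces of the matrices `gen i`. -/
def plane (i : Fin 5) : Submodule (ZMod 2) (Fin 6 → ZMod 2) :=
  LinearMap.range (gen i).vecMulLinear

lemma gen_injective : ∀ i, ∀ a : Fin 3 → ZMod 2, a ᵥ* gen i = 0 → a = 0 := by
  decide +kernel

lemma gen_disjoint : ∀ i j, i ≠ j → ∀ a b : Fin 3 → ZMod 2,
    a ᵥ* gen i = b ᵥ* gen j → a = 0 := by
  decide +kernel

lemma exists_agree : ∀ c₀ c₁ c₂ : Fin 3 → ZMod 2, ∃ a : Fin 3 → ZMod 2, a ≠ 0 ∧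
    ∃ i, a ᵥ* (Matrix.of ![c₀, c₁, c₂]) = a ᵥ* slope i := by
  decide +kernel

lemma vecMul_graphMatrix (a : Fin 3 → ZMod 2) (C : Matrix (Fin 3) (Fin 3) (ZMod 2)) :
    a ᵥ* graphMatrix C = Fin.append a (a ᵥ* C) := by
  ext k
  refine Fin.addCases (m := 3) (n := 3) (fun k => ?_) (fun k => ?_) k
  · rw [Fin.append_left]
    conv_rhs => rw [← Matrix.vecMul_one a]
    simp only [Matrix.vecMul, dotProduct, graphMatrix, Fin.append_left]
  · rw [Fin.append_right]
    simp only [Matrix.vecMul, dotProduct, graphMatrix, Fin.append_right]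

lemma finrank_plane (i : Fin 5) : Module.finrank (ZMod 2) (plane i) = 3 := by
  rw [plane, LinearMap.finrank_range_of_inj]
  · simp
  · rw [← LinearMap.ker_eq_bot, LinearMap.ker_eq_bot']
    exact gen_injective i

lemma plane_inf (i j : Fin 5) (hij : i ≠ j) : plane i ⊓ plane j = ⊥ := by
  rw [eq_bot_iff]
  rintro _ ⟨⟨a, rfl⟩, ⟨b, hb⟩⟩
  have ha : a = 0 := gen_disjoint i j hij a b hb.symm
  simp [ha]

/-- A 3-dimensional `W` disjoint from `{0} × F³` projects bijectively onto the first factor, so it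
contains the rows of `[1 | C]` for some `C`. -/
lemma exists_graph_rows (W : Submodule (ZMod 2) (Fin 6 → ZMod 2))
    (hW : Module.finrank (ZMod 2) W = 3) (h0 : W ⊓ plane 0 = ⊥) :
    ∃ C : Matrix (Fin 3) (Fin 3) (ZMod 2), ∀ i, graphMatrix C i ∈ W := by
  let p : (Fin 6 → ZMod 2) →ₗ[ZMod 2] (Fin 3 → ZMod 2) :=
    LinearMap.funLeft (ZMod 2) (ZMod 2) (Fin.castAdd 3)
  have hinj : Function.Injective (p.domRestrict W) := by
    rw [← LinearMap.ker_eq_bot, LinearMap.ker_eq_bot']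
    rintro ⟨w, hw⟩ hpw
    have hpw' : ∀ k : Fin 3, w (Fin.castAdd 3 k) = 0 := fun k => congrFun hpw k
    have hmem : w ∈ W ⊓ plane 0 := by
      refine ⟨hw, fun k => w (Fin.natAdd 3 k), ?_⟩
      ext k
      refine Fin.addCases (m := 3) (n := 3) (fun k => ?_) (fun k => ?_) k
      · rw [hpw']
        simp only [Matrix.vecMulLinear_apply, Matrix.vecMul, dotProduct, gen_zero_apply,
          Fin.append_left, Pi.zero_apply, mul_zero, Finset.sum_const_zero]
      · conv_rhs => rw [← congrFun (Matrix.vecMul_one fun k => w (Fin.natAdd 3 k)) k]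
        simp only [Matrix.vecMulLinear_apply, Matrix.vecMul, dotProduct, gen_zero_apply,
          Fin.append_right]
    rw [h0, Submodule.mem_bot] at hmem
    exact Subtype.ext hmem
  have hsurj : Function.Surjective (p.domRestrict W) :=
    (LinearMap.injective_iff_surjective_of_finrank_eq_finrank (by simp [hW])).mp hinj
  choose w hw using fun i => hsurj ((1 : Matrix (Fin 3) (Fin 3) (ZMod 2)) i)
  refine ⟨fun i k => (w i).1 (Fin.natAdd 3 k), fun i => ?_⟩
  convert (w i).2
  ext k
  refine Fin.addCases (m := 3) (n := 3) (fun k => ?_) (fun k => ?_) k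
  · simp only [graphMatrix, Fin.append_left]
    exact (congrFun (hw i) k).symm
  · simp only [graphMatrix, Fin.append_right]

end PlaneSpread

open PlaneSpread in
/-- There is a set of five 3-dimensional subspaces of `GF(2)^6`, pairwise intersecting
only in the zero vector (five pairwise disjoint planes `PG(2,2)` in `PG(5,2)`), that
cannot be extended: no further 3-dimensional subspace meets each of the five only in
the zero vector. -/
theorem maximal_partial_plane_spread :
    ∃ V : Fin 5 → Submodule (ZMod 2) (Fin 6 → ZMod 2),
      (∀ i, Module.finrank (ZMod 2) ↥(V i) = 3) ∧
      (∀ i j, i ≠ j → V i ⊓ V j = ⊥) ∧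
      ¬ ∃ W : Submodule (ZMod 2) (Fin 6 → ZMod 2),
          Module.finrank (ZMod 2) ↥W = 3 ∧ ∀ i, W ⊓ V i = ⊥ := by
  refine ⟨plane, finrank_plane, plane_inf, ?_⟩
  rintro ⟨W, hW, hdisj⟩
  obtain ⟨C, hC⟩ := exists_graph_rows W hW (hdisj 0)
  obtain ⟨a, ha, i, hai⟩ := exists_agree (C 0) (C 1) (C 2)
  have hCeq : Matrix.of ![C 0, C 1, C 2] = C := by
    ext r s
    fin_cases r <;> rfl
  rw [hCeq] at hai
  have hrow : a ᵥ* graphMatrix C = a ᵥ* gen i.succ := by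
    rw [gen_succ, vecMul_graphMatrix, vecMul_graphMatrix, hai]
  have hmemW : a ᵥ* graphMatrix C ∈ W := by
    rw [Matrix.vecMul_eq_sum]
    exact Submodule.sum_mem _ fun r _ => W.smul_mem _ (hC r)
  have hmem : a ᵥ* graphMatrix C ∈ W ⊓ plane i.succ := ⟨hmemW, a, hrow.symm⟩
  rw [hdisj, Submodule.mem_bot, hrow] at hmem
  exact ha (gen_injective _ a hmem)
end
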